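/- For every 0 ≤ q ≤ n and all f₀, f₁, …, f_{q+1} ∈ A, the restriction of Φ^{−q}(f₀ ⊗ f₁ ⊗ … ⊗ f_{q+1}) to the diagonal is Φ^{−q}(f₀ ⊗ f₁ ⊗ … ⊗ f_{q+1})(z, z) = (1/q!) f₀(z) f_{q+1}(z) · (Σ_j (∂f₁/∂z^j)(z) e^j) ∧ … ∧ (Σ_j (∂f_q/∂z^j)(z) e^j); under the identification of K^{−q} restricted to the diagonal with holomorphic q-forms (e^j ↦ dz^j), this reads (1/q!) f₀ f_{q+1} df₁ ∧ … ∧ df_q, the Hochschild–Kostant–Rosenberg map. -/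

import Mathlib

/-!
Setting: `n ≥ 1`, `U ⊆ ℂⁿ` a nonempty convex open set.  Points of `U × U` are
written `p = (z, ζ)` with `z = p.1`, `ζ = p.2`.  For `0 ≤ q ≤ n`,
`K^{-q} = Λ^q(ℂⁿ) ⊗ O(U×U)` is encoded by the coefficients of its elements on
the basis `e^I`, where the strictly increasing multi-indices
`I = (i₁ < … < i_q)` are encoded as finsets `I ⊆ Fin n` of cardinality `q`.
-/

open scoped BigOperators

namespace TwistedKoszul

variable (n : ℕ)

/-- Points of `ℂⁿ × ℂⁿ`. -/
abbrev Pt (n : ℕ) := (Fin n → ℂ) × (Fin n → ℂ)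

/-- A family of coefficients, indexed by the basis vectors `e^I` of the
exterior algebra `Λ^•(ℂⁿ)` (strictly increasing multi-indices `I`, encoded as
finsets).  An element of `K^{-q}` is such a family supported on finsets of
cardinality `q`, with holomorphic coefficients (see `MemK`). -/
abbrev Coeff (n : ℕ) := Finset (Fin n) → Pt n → ℂ

/-- The sign `(-1)^{#{i ∈ I | i < j}}`, so that `e^j ∧ e^I = sgn j I • e^{I ∪ {j}}`
for `j ∉ I`. -/
noncomputable def sgn (j : Fin n) (I : Finset (Fin n)) : ℂ :=
  (-1 : ℂ) ^ (I.filter (fun i => i < j)).card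

/-- The holomorphic partial derivative `∂f/∂z^j` in the `j`-th coordinate of
the first factor. -/
noncomputable def pd (j : Fin n) (f : Pt n → ℂ) (p : Pt n) : ℂ :=
  fderiv ℂ f p (Pi.single j 1, 0)

/-- The Koszul differential `d_K : K^{-q} → K^{-q+1}`: contraction with
`Σ_i (z^i - ζ^i) ě^i`, i.e. `d_K(f e^I) = Σ_r (-1)^{r-1} (z^{i_r} - ζ^{i_r}) f e^{I_r}`. -/
noncomputable def dK (ω : Coeff n) : Coeff n := fun J p =>
  ∑ j ∈ Jᶜ, sgn n j J * ((p.1 j - p.2 j) * ω (insert j J) p)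

/-- The homotopy operator `P : K^{-q} → K^{-q-1}`:
`P(f e^I) = Σ_j (∫₀¹ t^{|I|} (∂f/∂z^j)(ζ + t(z - ζ), ζ) dt) e^j ∧ e^I`. -/
noncomputable def P (ω : Coeff n) : Coeff n := fun J p =>
  ∑ j ∈ J, sgn n j (J.erase j) *
    ∫ t in (0:ℝ)..1, (t : ℂ) ^ (J.card - 1) *
      pd n j (ω (J.erase j)) (p.2 + t • (p.1 - p.2), p.2)

/-- The operator `res`: zero on `K^{-q}` for `q ≥ 1`, and
`res(f)(z, ζ) = f(ζ, ζ)` for `f ∈ K^0`. -/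
noncomputable def res (ω : Coeff n) : Coeff n := fun J p =>
  if J = ∅ then ω ∅ (p.2, p.2) else 0

/-- The element of `K^0 = O(U×U)` determined by a single function. -/
noncomputable def ofFun (f : Pt n → ℂ) : Coeff n := fun J p => if J = ∅ then f p else 0

/-- `ω` is an element of `K^{-q}` over `U × U`: it is supported on
multi-indices of length `q` and its coefficients are holomorphic on `U × U`. -/
noncomputable def MemK (U : Set (Fin n → ℂ)) (q : ℕ) (ω : Coeff n) : Prop :=
  (∀ I : Finset (Fin n), I.card ≠ q → ω I = 0) ∧
  ∀ I : Finset (Fin n), DifferentiableOn ℂ (ω I) (U ×ˢ U)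

end TwistedKoszul

namespace TwistedKoszul

/-- The `i`-th face of the bar differential: merge the `i`-th and `(i+1)`-st
entries of a tensor `g₀ ⊗ … ⊗ g_m`, i.e.
`g₀ ⊗ … ⊗ g_i g_{i+1} ⊗ … ⊗ g_m`.  The bar differential is
`∂(g) = Σ_{i=0}^{m-1} (-1)^i merge g i`. -/
def merge {A : Type*} [Mul A] {m : ℕ} (g : Fin (m + 1) → A) (i : Fin m) :
    Fin m → A := fun k =>
  if (k : ℕ) < (i : ℕ) then g k.castSucc
  else if k = i then g k.castSucc * g k.succ
  else g k.succ

/-- Replace the first and last entries of a tensor by `1`: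
`f₀ ⊗ f₁ ⊗ … ⊗ f_q ⊗ f_{q+1} ↦ 1 ⊗ f₁ ⊗ … ⊗ f_q ⊗ 1`. -/
def bord {n m : ℕ} (f : Fin (m + 2) → ((Fin n → ℂ) → ℂ)) :
    Fin (m + 2) → ((Fin n → ℂ) → ℂ) := fun k =>
  if k = 0 then 1 else if k = Fin.last (m + 1) then 1 else f k

variable (n : ℕ)

/-- The chain map `Φ^{-q} : B^{-q} = A^{⊗(q+2)} → K^{-q}` from the bar complex
of `A = O(U)` to the Koszul complex, defined on pure tensors by
`Φ^0(f₀ ⊗ f₁)(z, ζ) = f₀(z) f₁(ζ)` and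
`Φ^{-q}(f₀ ⊗ … ⊗ f_{q+1}) = f₀(z) f_{q+1}(ζ) · P(Φ^{-(q-1)}(∂(1 ⊗ f₁ ⊗ … ⊗ f_q ⊗ 1)))`. -/
noncomputable def Phi : (q : ℕ) → (Fin (q + 2) → ((Fin n → ℂ) → ℂ)) → Coeff n
  | 0, f => ofFun n (fun p => f 0 p.1 * f 1 p.2)
  | q + 1, f => fun J p =>
      f 0 p.1 * f (Fin.last (q + 2)) p.2 *
        P n (fun J' p' => ∑ i : Fin (q + 2), (-1 : ℂ) ^ (i : ℕ) *
          Phi q (merge (bord f) i) J' p') J p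

end TwistedKoszul

namespace TwistedKoszul

/-- The holomorphic partial derivative `∂g/∂z^j` of a function on `ℂⁿ`. -/
noncomputable def pdU (n : ℕ) (j : Fin n) (g : (Fin n → ℂ) → ℂ)
    (z : Fin n → ℂ) : ℂ :=
  fderiv ℂ g z (Pi.single j 1)

/-!
Let `d_z` be the exterior derivative in `z`. In the coefficient of `e^J` the operator `P` is `d_z`
followed by averaging over the segment from `ζ` to `z` with weight `t^{|J|-1}`. Averaging commutes
with `∂/∂z^j` up to raising the weight by one power of `t`, so `d_z ∘ P = 0` because
`d_z ∘ d_z = 0`; on the diagonal the average is just multiplication by `1/|J|`.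

Hence `Φ(1 ⊗ g₁ ⊗ … ⊗ 1)` is `d_z`-closed, and by the Leibniz rule
`d_z Φ(g₀ ⊗ … ⊗ g_m) = g_m(ζ) dg₀ ∧ Φ(1 ⊗ g₁ ⊗ … ⊗ 1)`. In `∂(1 ⊗ f₁ ⊗ … ⊗ f_q ⊗ 1)` all faces but
the first start with `1` and are killed by `d_z`, so on the diagonal
`Φ(f₀ ⊗ … ⊗ f_{q+1}) = (1/q) f₀ f_{q+1} df₁ ∧ Φ(1 ⊗ f₂ ⊗ … ⊗ f_q ⊗ 1)`, and induction on `q`, with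
Laplace expansion along the first row, gives the minors divided by `q!`.
-/

section SeveralComplexVariables

open Metric Set MeasureTheory Topology

variable {E F : Type*} [NormedAddCommGroup E] [NormedSpace ℂ E]
  [NormedAddCommGroup F] [NormedSpace ℂ F] {V : Set E} {f : E → F} {x : E}

theorem norm_fderiv_le_of_forall_mem_ball {r M : ℝ} (hr : 0 < r)
    (hf : DifferentiableOn ℂ f (ball x r)) (hM : ∀ y ∈ ball x r, ‖f y‖ ≤ M) :
    ‖fderiv ℂ f x‖ ≤ 2 * M / r := by
  refine Complex.norm_fderiv_le_div_of_mapsTo_ball hf (fun y hy => ?_) hr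
  rw [mem_closedBall]
  linarith [dist_le_norm_add_norm (f y) (f x), hM y hy, hM x (mem_ball_self hr)]

theorem continuousOn_fderiv_of_continuousOn_uncurry [FiniteDimensional ℂ E]
    {T : Type*} [TopologicalSpace T] {S : Set T} {G : T → E → F} (hV : IsOpen V)
    (hcont : ContinuousOn (Function.uncurry G) (S ×ˢ V))
    (hdiff : ∀ t ∈ S, DifferentiableOn ℂ (G t) V) (hx : x ∈ V) :
    ContinuousOn (fun t => fderiv ℂ (G t) x) S := by
  have : ProperSpace E := FiniteDimensional.proper ℂ E
  obtain ⟨r, hr, hrV⟩ := nhds_basis_closedBall.mem_iff.1 (hV.mem_nhds hx)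
  have hballV : ball x r ⊆ V := ball_subset_closedBall.trans hrV
  have hdiffAt : ∀ t ∈ S, DifferentiableAt ℂ (G t) x := fun t ht =>
    (hdiff t ht).differentiableAt (hV.mem_nhds hx)
  refine fun s hs => Metric.continuousWithinAt_iff'.2 fun ε hε => ?_
  obtain ⟨N, hN, hclose⟩ := (isCompact_closedBall x r).mem_uniformity_of_prod
    (hcont.mono (prod_mono_right hrV)) hs (dist_mem_uniformity (show 0 < ε * r / 3 by positivity))
  filter_upwards [hN, self_mem_nhdsWithin] with t htN htS
  have hbound : ∀ y ∈ ball x r, ‖(G t - G s) y‖ ≤ ε * r / 3 := fun y hy => by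
    have := hclose t htN y (ball_subset_closedBall hy)
    rw [Set.mem_ofPred_eq, dist_eq_norm] at this
    exact this.le
  calc dist (fderiv ℂ (G t) x) (fderiv ℂ (G s) x)
      = ‖fderiv ℂ (G t - G s) x‖ := by
        rw [dist_eq_norm, fderiv_sub (hdiffAt t htS) (hdiffAt s hs)]
    _ ≤ 2 * (ε * r / 3) / r := norm_fderiv_le_of_forall_mem_ball hr
        (((hdiff t htS).sub (hdiff s hs)).mono hballV) hbound
    _ < ε := by rw [div_lt_iff₀ hr]; nlinarith [mul_pos hε hr]

theorem hasFDerivAt_intervalIntegral_of_differentiableOn [FiniteDimensional ℂ E]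
    {a b : ℝ} {G : ℝ → E → F} (hV : IsOpen V)
    (hcont : ContinuousOn (Function.uncurry G) (uIcc a b ×ˢ V))
    (hdiff : ∀ t ∈ uIcc a b, DifferentiableOn ℂ (G t) V) (hx : x ∈ V) :
    HasFDerivAt (fun y => ∫ t in a..b, G t y) (∫ t in a..b, fderiv ℂ (G t) x) x := by
  have : ProperSpace E := FiniteDimensional.proper ℂ E
  obtain ⟨R, hR, hRV⟩ := nhds_basis_closedBall.mem_iff.1 (hV.mem_nhds hx)
  obtain ⟨M, hM⟩ := (isCompact_uIcc.prod (isCompact_closedBall x R)).exists_bound_of_continuousOn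
    (hcont.mono (prod_mono_right hRV))
  have hball : ∀ y ∈ ball x (R / 2), ball y (R / 2) ⊆ closedBall x R := fun y hy =>
    (ball_subset_ball' (by rw [mem_ball] at hy; linarith)).trans ball_subset_closedBall
  have hG : ∀ y ∈ V, IntervalIntegrable (fun t => G t y) volume a b := fun y hy =>
    (hcont.comp (f := fun t => (t, y)) (by fun_prop) fun t ht => ⟨ht, hy⟩).intervalIntegrable
  have hG' : IntervalIntegrable (fun t => fderiv ℂ (G t) x) volume a b :=
    (continuousOn_fderiv_of_continuousOn_uncurry hV hcont hdiff hx).intervalIntegrable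
  refine intervalIntegral.hasFDerivAt_integral_of_dominated_of_fderiv_le
    (F := fun y t => G t y) (F' := fun y t => fderiv ℂ (G t) y)
    (bound := fun _ => 2 * M / (R / 2)) (ball_mem_nhds x (half_pos hR)) ?_ (hG x hx)
    hG'.def'.aestronglyMeasurable ?_ (by simp) ?_
  · filter_upwards [hV.mem_nhds hx] with y hy using (hG y hy).def'.aestronglyMeasurable
  · exact .of_forall fun t ht y hy => norm_fderiv_le_of_forall_mem_ball (half_pos hR)
      ((hdiff t (uIoc_subset_uIcc ht)).mono ((hball y hy).trans hRV))
      fun u hu => hM (t, u) ⟨uIoc_subset_uIcc ht, hball y hy hu⟩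
  · exact .of_forall fun t ht y hy => ((hdiff t (uIoc_subset_uIcc ht)).differentiableAt
      (hV.mem_nhds (hRV (hball y hy (mem_ball_self (half_pos hR)))))).hasFDerivAt

theorem differentiableOn_circleIntegral [FiniteDimensional ℂ E] {c : ℂ} {r : ℝ} {G : ℂ → E → F}
    (hr : 0 ≤ r) (hV : IsOpen V) (hcont : ContinuousOn (Function.uncurry G) (sphere c r ×ˢ V))
    (hdiff : ∀ w ∈ sphere c r, DifferentiableOn ℂ (G w) V) :
    DifferentiableOn ℂ (fun y => ∮ w in C(c, r), G w y) V := by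
  refine fun y hy => (hasFDerivAt_intervalIntegral_of_differentiableOn hV ?_ (fun θ _ =>
    (hdiff _ (circleMap_mem_sphere c hr θ)).const_smul _)
      hy).differentiableAt.differentiableWithinAt
  have hderiv : Continuous (deriv (circleMap c r)) := by
    simp only [funext (deriv_circleMap c r)]
    fun_prop
  exact (hderiv.comp continuous_fst).continuousOn.smul <|
    hcont.comp (f := fun p : ℝ × E => (circleMap c r p.1, p.2)) (by fun_prop)
      fun p hp => ⟨circleMap_mem_sphere c hr p.1, hp.2⟩

theorem hasDerivAt_comp_line {y v : E} {w : ℂ} (hf : DifferentiableAt ℂ f (y + w • v)) :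
    HasDerivAt (fun u : ℂ => f (y + u • v)) (fderiv ℂ f (y + w • v) v) w :=
  hf.hasFDerivAt.comp_hasDerivAt w (by simpa using ((hasDerivAt_id w).smul_const v).const_add y)

theorem fderiv_apply_eq_circleIntegral [CompleteSpace F] {y v : E} {r : ℝ} (hr : 0 < r)
    (hV : IsOpen V) (hf : DifferentiableOn ℂ f V)
    (hline : ∀ w ∈ closedBall (0 : ℂ) r, y + w • v ∈ V) :
    fderiv ℂ f y v =
      (2 * Real.pi * Complex.I : ℂ)⁻¹ • ∮ w in C(0, r), (w ^ 2)⁻¹ • f (y + w • v) := by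
  have hderiv : ∀ w : ℂ, y + w • v ∈ V →
      HasDerivAt (fun u : ℂ => f (y + u • v)) (fderiv ℂ f (y + w • v) v) w := fun w hw =>
    hasDerivAt_comp_line (hf.differentiableAt (hV.mem_nhds hw))
  have hcauchy := Complex.two_pi_I_inv_smul_circleIntegral_sub_sq_inv_smul_of_differentiable
    (hV.preimage (by fun_prop : Continuous fun w : ℂ => y + w • v)) hline
    (fun w hw => (hderiv w hw).differentiableAt.differentiableWithinAt) (mem_ball_self hr)
  simpa [(hderiv 0 (hline 0 (mem_closedBall_self hr.le))).deriv] using hcauchy.symm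

theorem differentiableOn_fderiv_apply [FiniteDimensional ℂ E] [CompleteSpace F] (hV : IsOpen V)
    (hf : DifferentiableOn ℂ f V) (v : E) : DifferentiableOn ℂ (fun y => fderiv ℂ f y v) V := by
  intro x hx
  have hW : IsOpen {p : E × ℂ | p.1 + p.2 • v ∈ V} := hV.preimage (by fun_prop)
  obtain ⟨ε, hε, hsub⟩ := Metric.isOpen_iff.1 hW (x, 0) (by simpa using hx)
  have hline : ∀ y ∈ ball x ε, ∀ w ∈ closedBall (0 : ℂ) (ε / 2), y + w • v ∈ V := fun y hy w hw =>
    hsub (show (y, w) ∈ ball (x, 0) ε from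
      ball_prod_same x (0 : ℂ) ε ▸ ⟨hy, closedBall_subset_ball (half_lt_self hε) hw⟩)
  have hline' : ∀ w ∈ sphere (0 : ℂ) (ε / 2), MapsTo (fun y => y + w • v) (ball x ε) V :=
    fun w hw y hy => hline y hy w (sphere_subset_closedBall hw)
  have hne : ∀ w ∈ sphere (0 : ℂ) (ε / 2), w ^ 2 ≠ 0 := fun w hw =>
    pow_ne_zero 2 (ne_of_mem_sphere hw (half_pos hε).ne')
  have hintegral : DifferentiableOn ℂ (fun y => (2 * Real.pi * Complex.I : ℂ)⁻¹ •
      ∮ w in C(0, ε / 2), (w ^ 2)⁻¹ • f (y + w • v)) (ball x ε) := by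
    refine (differentiableOn_circleIntegral (half_pos hε).le isOpen_ball ?_
      fun w hw => ?_).const_smul _
    · refine ContinuousOn.smul (f := fun p : ℂ × E => (p.1 ^ 2)⁻¹)
        (ContinuousOn.inv₀ (by fun_prop) fun p hp => hne p.1 hp.1) ?_
      exact hf.continuousOn.comp (f := fun p : ℂ × E => p.2 + p.1 • v) (by fun_prop)
        fun p hp => hline' p.1 hp.1 hp.2
    · exact (hf.comp (by fun_prop) (hline' w hw)).const_smul _
  have hx_ball : ball x ε ∈ 𝓝 x := ball_mem_nhds x hε
  refine ((hintegral.differentiableAt hx_ball).congr_of_eventuallyEq ?_).differentiableWithinAt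
  filter_upwards [hx_ball] with y hy using
    fderiv_apply_eq_circleIntegral (half_pos hε) hV hf (hline y hy)

theorem contDiffOn_of_differentiableOn [FiniteDimensional ℂ E] [CompleteSpace F] (hV : IsOpen V)
    (hf : DifferentiableOn ℂ f V) (m : ℕ) : ContDiffOn ℂ m f V := by
  induction m generalizing f with
  | zero => exact contDiffOn_zero.2 hf.continuousOn
  | succ m ih =>
    rw [Nat.cast_succ, contDiffOn_succ_iff_fderiv_of_isOpen hV]
    exact ⟨hf, by simp, contDiffOn_clm_apply.2 fun v => ih (differentiableOn_fderiv_apply hV hf v)⟩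

theorem fderiv_fderiv_apply_comm [FiniteDimensional ℂ E] [CompleteSpace F] (hV : IsOpen V)
    (hf : DifferentiableOn ℂ f V) (hx : x ∈ V) (u v : E) :
    fderiv ℂ (fun y => fderiv ℂ f y u) x v = fderiv ℂ (fun y => fderiv ℂ f y v) x u := by
  have hC2 : ContDiffAt ℂ 2 f x :=
    (contDiffOn_of_differentiableOn hV hf 2).contDiffAt (hV.mem_nhds hx)
  have hf' : DifferentiableAt ℂ (fderiv ℂ f) x :=
    (hC2.fderiv_right (m := 1) (by norm_num)).differentiableAt (by norm_num)
  have happly : ∀ u v, fderiv ℂ (fun y => fderiv ℂ f y u) x v = fderiv ℂ (fderiv ℂ f) x v u :=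
    fun u v => by simp [fderiv_clm_apply hf' (differentiableAt_const u)]
  rw [happly, happly]
  exact (hC2.isSymmSndFDerivAt (by simp)).eq v u

end SeveralComplexVariables

section ExteriorAlgebra

variable {n q : ℕ}

/-- The wedge product with a vector, in coefficients: if `w` is the family of coefficients of
`∑_I w_I e^I`, then `vecWedge v w` is that of `(∑_j v_j e^j) ∧ ∑_I w_I e^I`. -/
noncomputable def vecWedge (v : Fin n → ℂ) (w : Finset (Fin n) → ℂ) : Finset (Fin n) → ℂ :=
  fun J => ∑ j ∈ J, sgn n j (J.erase j) * (v j * w (J.erase j))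

/-- The coefficients of `v₁ ∧ … ∧ v_q`: on `e^J` with `|J| = q`, the minor of the matrix with rows
`v₁, …, v_q` on the columns `J`. -/
noncomputable def wedgeCoeff (v : Fin q → Fin n → ℂ) (J : Finset (Fin n)) : ℂ :=
  if hJ : J.card = q then
    Matrix.det (Matrix.of fun r c : Fin q => v r (J.orderEmbOfFin hJ c)) else 0

theorem vecWedge_zero_left (w : Finset (Fin n) → ℂ) : vecWedge 0 w = 0 := by
  ext J
  simp [vecWedge]

theorem vecWedge_const_mul (v : Fin n → ℂ) (c : ℂ) (w : Finset (Fin n) → ℂ) (J : Finset (Fin n)) :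
    vecWedge v (fun I => c * w I) J = c * vecWedge v w J := by
  simp only [vecWedge, Finset.mul_sum]
  exact Finset.sum_congr rfl fun j _ => by ring

theorem sgn_erase_mul_sgn_erase_erase {J : Finset (Fin n)} {j k : Fin n} (hj : j ∈ J) (hk : k ∈ J)
    (hjk : j ≠ k) :
    sgn n k (J.erase k) * sgn n j ((J.erase k).erase j) =
      -(sgn n j (J.erase j) * sgn n k ((J.erase j).erase k)) := by
  wlog hlt : j < k generalizing j k with H
  · rw [H hk hj hjk.symm (lt_of_le_of_ne (not_lt.1 hlt) hjk.symm), neg_neg]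
  have hbelow_j : ((J.erase k).erase j).filter (· < j) = (J.erase j).filter (· < j) := by
    grind
  have hbelow_k : (J.erase k).filter (· < k) =
      insert j (((J.erase j).erase k).filter (· < k)) := by
    grind
  simp only [sgn]
  rw [hbelow_j, hbelow_k, Finset.card_insert_of_notMem (by simp)]
  ring

theorem sum_sgn_mul_sum_sgn_mul_eq_zero {J : Finset (Fin n)} {a : Fin n → Fin n → ℂ}
    (ha : ∀ j k, a j k = a k j) :
    ∑ k ∈ J, sgn n k (J.erase k) *
      ∑ j ∈ J.erase k, sgn n j ((J.erase k).erase j) * a k j = 0 := by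
  simp only [Finset.mul_sum]
  rw [Finset.sum_sigma']
  have hanti : ∀ p ∈ J.sigma fun k => J.erase k,
      sgn n p.1 (J.erase p.1) * (sgn n p.2 ((J.erase p.1).erase p.2) * a p.1 p.2) +
        sgn n p.2 (J.erase p.2) * (sgn n p.1 ((J.erase p.2).erase p.1) * a p.2 p.1) = 0 := by
    rintro ⟨k, j⟩ hp
    obtain ⟨hk, hj⟩ := Finset.mem_sigma.1 hp
    rw [← mul_assoc, ← mul_assoc, ha j k, sgn_erase_mul_sgn_erase_erase
      (Finset.mem_of_mem_erase hj) hk (Finset.ne_of_mem_erase hj)]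
    ring
  exact Finset.sum_involution (fun p _ => ⟨p.2, p.1⟩) hanti (by grind) (by grind) (by simp)

theorem orderEmbOfFin_erase {α : Type*} [LinearOrder α] {J : Finset α} (hJ : J.card = q + 1)
    (c : Fin (q + 1)) (h : (J.erase (J.orderEmbOfFin hJ c)).card = q) (r : Fin q) :
    (J.erase (J.orderEmbOfFin hJ c)).orderEmbOfFin h r = J.orderEmbOfFin hJ (c.succAbove r) := by
  refine (congrFun (Finset.orderEmbOfFin_unique h
    (f := fun r => J.orderEmbOfFin hJ (c.succAbove r)) (fun r => ?_) ?_) r).symm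
  · simp [Fin.succAbove_ne]
  · exact (J.orderEmbOfFin hJ).strictMono.comp (Fin.strictMono_succAbove c)

theorem sgn_orderEmbOfFin {J : Finset (Fin n)} (hJ : J.card = q + 1) (c : Fin (q + 1)) :
    sgn n (J.orderEmbOfFin hJ c) (J.erase (J.orderEmbOfFin hJ c)) = (-1) ^ (c : ℕ) := by
  have hbelow : (J.erase (J.orderEmbOfFin hJ c)).filter (· < J.orderEmbOfFin hJ c) =
      (Finset.Iio c).map (J.orderEmbOfFin hJ).toEmbedding := by
    ext i
    have hi : i ∈ J ↔ ∃ a, J.orderEmbOfFin hJ a = i := by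
      rw [← Finset.mem_coe, ← Finset.range_orderEmbOfFin J hJ, Set.mem_range]
    simp only [Finset.mem_filter, Finset.mem_erase, hi, Finset.mem_map, Finset.mem_Iio,
      RelEmbedding.coe_toEmbedding]
    constructor
    · rintro ⟨⟨-, a, rfl⟩, hlt⟩
      exact ⟨a, (J.orderEmbOfFin hJ).lt_iff_lt.1 hlt, rfl⟩
    · rintro ⟨a, hac, rfl⟩
      have hlt := (J.orderEmbOfFin hJ).lt_iff_lt.2 hac
      exact ⟨⟨hlt.ne, a, rfl⟩, hlt⟩
  rw [sgn, hbelow, Finset.card_map, Fin.card_Iio]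

theorem vecWedge_wedgeCoeff (v : Fin (q + 1) → Fin n → ℂ) :
    vecWedge (v 0) (wedgeCoeff fun r => v r.succ) = wedgeCoeff v := by
  ext J
  by_cases hJ : J.card = q + 1
  · have hcard : ∀ c, (J.erase (J.orderEmbOfFin hJ c)).card = q := fun c => by
      simp [Finset.card_erase_of_mem, hJ]
    have hsum := Finset.sum_map Finset.univ (J.orderEmbOfFin hJ).toEmbedding
      fun j => sgn n j (J.erase j) * (v 0 j * wedgeCoeff (fun r => v r.succ) (J.erase j))
    rw [Finset.map_orderEmbOfFin_univ] at hsum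
    rw [vecWedge, hsum, wedgeCoeff, dif_pos hJ, Matrix.det_succ_row_zero]
    refine Finset.sum_congr rfl fun c _ => ?_
    simp only [RelEmbedding.coe_toEmbedding, sgn_orderEmbOfFin, wedgeCoeff, dif_pos (hcard c),
      orderEmbOfFin_erase, Matrix.of_apply, ← mul_assoc]
    rfl
  · rw [wedgeCoeff, dif_neg hJ]
    refine Finset.sum_eq_zero fun j hj => ?_
    have hcard : (J.erase j).card ≠ q := by
      rw [← Finset.card_erase_add_one hj] at hJ
      simpa using hJ
    simp [wedgeCoeff, hcard]

end ExteriorAlgebra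

section ExteriorDerivative

variable {n : ℕ} {V : Set (Pt n)} {ω : Coeff n} {p : Pt n}

/-- The exterior derivative in the variable `z`, `d_z (∑_I ω_I e^I) = ∑_{j, I} ∂ω_I/∂z^j e^j ∧ e^I`,
with `ζ` as a parameter. -/
noncomputable def dz (ω : Coeff n) : Coeff n := fun J p =>
  ∑ j ∈ J, sgn n j (J.erase j) * pd n j (ω (J.erase j)) p

theorem differentiableOn_pd (hV : IsOpen V) {g : Pt n → ℂ} (hg : DifferentiableOn ℂ g V)
    (j : Fin n) : DifferentiableOn ℂ (pd n j g) V :=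
  differentiableOn_fderiv_apply hV hg _

theorem pd_pd_comm (hV : IsOpen V) {g : Pt n → ℂ} (hg : DifferentiableOn ℂ g V) (hp : p ∈ V)
    (j k : Fin n) : pd n j (pd n k g) p = pd n k (pd n j g) p :=
  fderiv_fderiv_apply_comm hV hg hp _ _

theorem pd_congr {g h : Pt n → ℂ} (hV : IsOpen V) (hgh : Set.EqOn g h V) (hp : p ∈ V)
    (j : Fin n) : pd n j g p = pd n j h p := by
  rw [pd, (hgh.eventuallyEq_of_mem (hV.mem_nhds hp)).fderiv_eq, pd]

theorem pd_sum_const_mul {ι : Type*} {s : Finset ι} {c : ι → ℂ} {g : ι → Pt n → ℂ}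
    (hg : ∀ i ∈ s, DifferentiableAt ℂ (g i) p) (j : Fin n) :
    pd n j (fun p => ∑ i ∈ s, c i * g i p) p = ∑ i ∈ s, c i * pd n j (g i) p := by
  have hderiv := HasFDerivAt.fun_sum fun i hi => (hg i hi).hasFDerivAt.const_mul (c i)
  simp [pd, hderiv.fderiv]

theorem pd_fst_mul_snd_mul {a b : (Fin n → ℂ) → ℂ} {g : Pt n → ℂ}
    (ha : DifferentiableAt ℂ a p.1) (hb : DifferentiableAt ℂ b p.2) (hg : DifferentiableAt ℂ g p)
    (j : Fin n) :
    pd n j (fun p => a p.1 * b p.2 * g p) p =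
      b p.2 * (pdU n j a p.1 * g p) + a p.1 * b p.2 * pd n j g p := by
  have ha' : HasFDerivAt (fun p : Pt n => a p.1) _ p := ha.hasFDerivAt.comp p hasFDerivAt_fst
  have hb' : HasFDerivAt (fun p : Pt n => b p.2) _ p := hb.hasFDerivAt.comp p hasFDerivAt_snd
  rw [pd, ((ha'.fun_mul hb').fun_mul hg.hasFDerivAt).fderiv]
  simp only [smul_add, _root_.add_apply, _root_.smul_apply, smul_eq_mul,
    ContinuousLinearMap.comp_apply, ContinuousLinearMap.coe_snd', map_zero, mul_zero,
    ContinuousLinearMap.coe_fst', zero_add, pdU, pd]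
  ring

theorem differentiableOn_dz (hV : IsOpen V) (hω : ∀ I, DifferentiableOn ℂ (ω I) V)
    (J : Finset (Fin n)) : DifferentiableOn ℂ (dz ω J) V :=
  DifferentiableOn.fun_sum fun j _ => (differentiableOn_pd hV (hω _) j).const_mul _

theorem dz_dz_eq_zero (hV : IsOpen V) (hω : ∀ I, DifferentiableOn ℂ (ω I) V) (J : Finset (Fin n))
    (hp : p ∈ V) : dz (dz ω) J p = 0 := by
  have hexpand : ∀ k, pd n k (dz ω (J.erase k)) p = ∑ j ∈ J.erase k,
      sgn n j ((J.erase k).erase j) * pd n k (pd n j (ω ((J.erase k).erase j))) p := fun k =>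
    pd_sum_const_mul (fun j _ => (differentiableOn_pd hV (hω _) j).differentiableAt
      (hV.mem_nhds hp)) k
  rw [dz]
  simp only [hexpand]
  refine sum_sgn_mul_sum_sgn_mul_eq_zero fun k j => ?_
  rw [pd_pd_comm hV (hω _) hp, Finset.erase_right_comm]

theorem dz_sum_const_mul {ι : Type*} {s : Finset ι} {c : ι → ℂ} {ω : ι → Coeff n}
    (hω : ∀ i ∈ s, ∀ I, DifferentiableAt ℂ (ω i I) p) (J : Finset (Fin n)) :
    dz (fun I p => ∑ i ∈ s, c i * ω i I p) J p = ∑ i ∈ s, c i * dz (ω i) J p := by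
  simp only [dz, pd_sum_const_mul fun i hi => hω i hi _, Finset.mul_sum]
  rw [Finset.sum_comm]
  exact Finset.sum_congr rfl fun i _ => Finset.sum_congr rfl fun j _ => by ring

theorem dz_fst_mul_snd_mul {a b : (Fin n → ℂ) → ℂ} (ha : DifferentiableAt ℂ a p.1)
    (hb : DifferentiableAt ℂ b p.2) (hω : ∀ I, DifferentiableAt ℂ (ω I) p) (J : Finset (Fin n)) :
    dz (fun I p => a p.1 * b p.2 * ω I p) J p =
      b p.2 * vecWedge (fun j => pdU n j a p.1) (fun I => ω I p) J +
        a p.1 * b p.2 * dz ω J p := by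
  simp only [dz, vecWedge, pd_fst_mul_snd_mul ha hb (hω _), Finset.mul_sum,
    ← Finset.sum_add_distrib]
  exact Finset.sum_congr rfl fun j _ => by ring

end ExteriorDerivative

section HomotopyOperator

open Set

variable {n : ℕ} {U : Set (Fin n → ℂ)} {g : Pt n → ℂ} {ω : Coeff n} {p : Pt n}

/-- The contraction `(z, ζ) ↦ (ζ + t(z - ζ), ζ)` towards the diagonal. -/
noncomputable def segMap (t : ℝ) : Pt n →L[ℂ] Pt n :=
  (ContinuousLinearMap.snd ℂ (Fin n → ℂ) (Fin n → ℂ) + (t : ℂ) •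
    (ContinuousLinearMap.fst ℂ (Fin n → ℂ) (Fin n → ℂ) -
      ContinuousLinearMap.snd ℂ (Fin n → ℂ) (Fin n → ℂ))).prod
    (ContinuousLinearMap.snd ℂ (Fin n → ℂ) (Fin n → ℂ))

/-- The weighted mean `∫₀¹ t^m g(ζ + t(z - ζ), ζ) dt` over a segment, so that the homotopy operator
is `P = segMean ∘ d_z` with `m = |J| - 1` in the coefficient of `e^J`. -/
noncomputable def segMean (m : ℕ) (g : Pt n → ℂ) (p : Pt n) : ℂ :=
  ∫ t in (0 : ℝ)..1, (t : ℂ) ^ m * g (segMap t p)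

theorem segMap_apply (t : ℝ) (p : Pt n) : segMap t p = (p.2 + t • (p.1 - p.2), p.2) := by
  simp [segMap]

theorem segMap_single (t : ℝ) (j : Fin n) :
    segMap t (Pi.single j 1, 0) = (t : ℂ) • ((Pi.single j 1, 0) : Pt n) := by
  simp [segMap_apply]

theorem segMap_mem (hU : Convex ℝ U) (hp : p ∈ U ×ˢ U) {t : ℝ} (ht : t ∈ uIcc (0 : ℝ) 1) :
    segMap t p ∈ U ×ˢ U := by
  rw [segMap_apply]
  exact ⟨hU.add_smul_sub_mem hp.2 hp.1 (uIcc_of_le (zero_le_one (α := ℝ)) ▸ ht), hp.2⟩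

theorem continuousOn_pow_mul_segMap (hU : Convex ℝ U) (hg : ContinuousOn g (U ×ˢ U)) (m : ℕ) :
    ContinuousOn (fun x : ℝ × Pt n => (x.1 : ℂ) ^ m * g (segMap x.1 x.2))
      (uIcc 0 1 ×ˢ (U ×ˢ U)) := by
  refine ContinuousOn.mul (by fun_prop) ?_
  refine hg.comp (f := fun x : ℝ × Pt n => segMap x.1 x.2) ?_ fun x hx => segMap_mem hU hx.2 hx.1
  simp only [segMap_apply]
  fun_prop

theorem differentiableOn_pow_mul_segMap (hU : Convex ℝ U) (hg : DifferentiableOn ℂ g (U ×ˢ U))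
    (m : ℕ) {t : ℝ} (ht : t ∈ uIcc (0 : ℝ) 1) :
    DifferentiableOn ℂ (fun p => (t : ℂ) ^ m * g (segMap t p)) (U ×ˢ U) :=
  (hg.comp (segMap t).differentiableOn fun _ hp => segMap_mem hU hp ht).const_mul _

theorem pd_pow_mul_segMap {t : ℝ} (hg : DifferentiableAt ℂ g (segMap t p)) (m : ℕ) (j : Fin n) :
    pd n j (fun p => (t : ℂ) ^ m * g (segMap t p)) p =
      (t : ℂ) ^ (m + 1) * pd n j g (segMap t p) := by
  have hderiv : HasFDerivAt (fun p => (t : ℂ) ^ m * g (segMap t p))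
      ((t : ℂ) ^ m • (fderiv ℂ g (segMap t p)).comp (segMap t)) p :=
    (hg.hasFDerivAt.comp p (segMap t).hasFDerivAt).const_mul _
  rw [pd, hderiv.fderiv, _root_.smul_apply, ContinuousLinearMap.comp_apply, segMap_single, map_smul,
    smul_smul, ← pow_succ, smul_eq_mul, pd]

theorem hasFDerivAt_segMean (hUopen : IsOpen U) (hU : Convex ℝ U)
    (hg : DifferentiableOn ℂ g (U ×ˢ U)) (m : ℕ) (hp : p ∈ U ×ˢ U) :
    HasFDerivAt (segMean m g)
      (∫ t in (0 : ℝ)..1, fderiv ℂ (fun p => (t : ℂ) ^ m * g (segMap t p)) p) p :=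
  hasFDerivAt_intervalIntegral_of_differentiableOn (hUopen.prod hUopen)
    (continuousOn_pow_mul_segMap hU hg.continuousOn m)
    (fun _ => differentiableOn_pow_mul_segMap hU hg m) hp

theorem differentiableOn_segMean (hUopen : IsOpen U) (hU : Convex ℝ U)
    (hg : DifferentiableOn ℂ g (U ×ˢ U)) (m : ℕ) : DifferentiableOn ℂ (segMean m g) (U ×ˢ U) :=
  fun _ hp => (hasFDerivAt_segMean hUopen hU hg m hp).differentiableAt.differentiableWithinAt

theorem pd_segMean (hUopen : IsOpen U) (hU : Convex ℝ U) (hg : DifferentiableOn ℂ g (U ×ˢ U))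
    (m : ℕ) (hp : p ∈ U ×ˢ U) (j : Fin n) :
    pd n j (segMean m g) p = segMean (m + 1) (pd n j g) p := by
  have hO : IsOpen (U ×ˢ U) := hUopen.prod hUopen
  have hint : IntervalIntegrable
      (fun t : ℝ => fderiv ℂ (fun p => (t : ℂ) ^ m * g (segMap t p)) p) MeasureTheory.volume 0 1 :=
    (continuousOn_fderiv_of_continuousOn_uncurry hO
      (continuousOn_pow_mul_segMap hU hg.continuousOn m)
      (fun _ => differentiableOn_pow_mul_segMap hU hg m) hp).intervalIntegrable
  rw [pd, (hasFDerivAt_segMean hUopen hU hg m hp).fderiv,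
    ContinuousLinearMap.intervalIntegral_apply hint]
  exact intervalIntegral.integral_congr fun t ht => pd_pow_mul_segMap
    (hg.differentiableAt (hO.mem_nhds (segMap_mem hU hp ht))) m j

theorem segMean_sum_const_mul (hU : Convex ℝ U) {ι : Type*} {s : Finset ι} {c : ι → ℂ}
    {g : ι → Pt n → ℂ} (hg : ∀ i ∈ s, ContinuousOn (g i) (U ×ˢ U)) (m : ℕ) (hp : p ∈ U ×ˢ U) :
    segMean m (fun p => ∑ i ∈ s, c i * g i p) p = ∑ i ∈ s, c i * segMean m (g i) p := by
  have hint : ∀ i ∈ s, IntervalIntegrable (fun t : ℝ => (t : ℂ) ^ m * g i (segMap t p))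
      MeasureTheory.volume 0 1 := fun i hi =>
    ((continuousOn_pow_mul_segMap hU (hg i hi) m).comp (f := fun t : ℝ => (t, p)) (by fun_prop)
      fun _ ht => ⟨ht, hp⟩).intervalIntegrable
  simp only [segMean, Finset.mul_sum, mul_left_comm _ (c _)]
  rw [intervalIntegral.integral_finsetSum fun i hi => (hint i hi).const_mul (c i)]
  simp only [intervalIntegral.integral_const_mul]

theorem integral_ofReal_pow (m : ℕ) : ∫ t in (0 : ℝ)..1, (t : ℂ) ^ m = ((m : ℂ) + 1)⁻¹ := by
  simp only [← Complex.ofReal_pow]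
  rw [intervalIntegral.integral_ofReal, integral_pow]
  simp

theorem segMean_diag (m : ℕ) (g : Pt n → ℂ) (z : Fin n → ℂ) :
    segMean m g (z, z) = ((m : ℂ) + 1)⁻¹ * g (z, z) := by
  simp [segMean, segMap_apply, integral_ofReal_pow]

theorem P_apply (ω : Coeff n) (J : Finset (Fin n)) (p : Pt n) :
    P n ω J p =
      ∑ j ∈ J, sgn n j (J.erase j) * segMean (J.card - 1) (pd n j (ω (J.erase j))) p := by
  simp only [P, segMean, segMap_apply]

theorem P_eq_segMean_dz (hUopen : IsOpen U) (hU : Convex ℝ U)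
    (hω : ∀ I, DifferentiableOn ℂ (ω I) (U ×ˢ U)) (J : Finset (Fin n)) (hp : p ∈ U ×ˢ U) :
    P n ω J p = segMean (J.card - 1) (dz ω J) p := by
  rw [P_apply]
  exact (segMean_sum_const_mul hU (fun j _ =>
    (differentiableOn_pd (hUopen.prod hUopen) (hω _) j).continuousOn) _ hp).symm

theorem P_diag (ω : Coeff n) (J : Finset (Fin n)) (z : Fin n → ℂ) :
    P n ω J (z, z) = (J.card : ℂ)⁻¹ * dz ω J (z, z) := by
  rw [P_apply, dz, Finset.mul_sum]
  refine Finset.sum_congr rfl fun j hj => ?_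
  have hcard : ((J.card - 1 : ℕ) : ℂ) + 1 = J.card := by
    exact_mod_cast Nat.sub_add_cancel (Finset.card_pos.2 ⟨j, hj⟩)
  rw [segMean_diag, hcard, mul_left_comm]

theorem differentiableOn_P (hUopen : IsOpen U) (hU : Convex ℝ U)
    (hω : ∀ I, DifferentiableOn ℂ (ω I) (U ×ˢ U)) (J : Finset (Fin n)) :
    DifferentiableOn ℂ (P n ω J) (U ×ˢ U) :=
  (differentiableOn_segMean hUopen hU (differentiableOn_dz (hUopen.prod hUopen) hω J) _).congr
    fun _ hp => P_eq_segMean_dz hUopen hU hω J hp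

theorem dz_P_eq_zero (hUopen : IsOpen U) (hU : Convex ℝ U)
    (hω : ∀ I, DifferentiableOn ℂ (ω I) (U ×ˢ U)) (J : Finset (Fin n)) (hp : p ∈ U ×ˢ U) :
    dz (P n ω) J p = 0 := by
  have hO : IsOpen (U ×ˢ U) := hUopen.prod hUopen
  have hdz : ∀ I, DifferentiableOn ℂ (dz ω I) (U ×ˢ U) := differentiableOn_dz hO hω
  have hpd : ∀ j ∈ J, pd n j (P n ω (J.erase j)) p =
      segMean (J.card - 1 - 1 + 1) (pd n j (dz ω (J.erase j))) p := fun j hj => by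
    rw [pd_congr hO (fun x hx => P_eq_segMean_dz hUopen hU hω _ hx) hp, pd_segMean hUopen hU
      (hdz _) _ hp, Finset.card_erase_of_mem hj]
  calc dz (P n ω) J p
      = ∑ j ∈ J, sgn n j (J.erase j) *
          segMean (J.card - 1 - 1 + 1) (pd n j (dz ω (J.erase j))) p :=
        Finset.sum_congr rfl fun j hj => by rw [hpd j hj]
    _ = segMean (J.card - 1 - 1 + 1) (dz (dz ω) J) p :=
        (segMean_sum_const_mul hU
          (fun j _ => (differentiableOn_pd hO (hdz _) j).continuousOn) _ hp).symm
    _ = ∫ _ in (0 : ℝ)..1, (0 : ℂ) := intervalIntegral.integral_congr fun t ht => by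
        simp only [dz_dz_eq_zero hO hω J (segMap_mem hU hp ht), mul_zero]
    _ = 0 := by simp

end HomotopyOperator

section BarComplex

variable {n m q : ℕ} {U : Set (Fin n → ℂ)} {p : Pt n} {z : Fin n → ℂ}

theorem differentiableOn_bord {f : Fin (m + 2) → (Fin n → ℂ) → ℂ}
    (hf : ∀ k, DifferentiableOn ℂ (f k) U) (k : Fin (m + 2)) :
    DifferentiableOn ℂ (bord f k) U := by
  unfold bord
  split_ifs
  exacts [differentiableOn_const 1, differentiableOn_const 1, hf k]

theorem differentiableOn_merge {g : Fin (m + 1) → (Fin n → ℂ) → ℂ}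
    (hg : ∀ k, DifferentiableOn ℂ (g k) U) (i k : Fin m) : DifferentiableOn ℂ (merge g i k) U := by
  unfold merge
  split_ifs
  exacts [hg _, (hg _).mul (hg _), hg _]

theorem bord_zero (f : Fin (m + 2) → (Fin n → ℂ) → ℂ) : bord f 0 = 1 :=
  if_pos rfl

theorem bord_last (f : Fin (m + 2) → (Fin n → ℂ) → ℂ) : bord f (Fin.last (m + 1)) = 1 := by
  simp [bord]

theorem bord_succ_castSucc (f : Fin (m + 2) → (Fin n → ℂ) → ℂ) (r : Fin m) :
    bord f r.succ.castSucc = f r.succ.castSucc := by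
  rw [bord, if_neg (by simp), if_neg (Fin.castSucc_lt_last _).ne]

theorem bord_bord (f : Fin (m + 2) → (Fin n → ℂ) → ℂ) : bord (bord f) = bord f := by
  ext k
  unfold bord
  split_ifs <;> rfl

theorem merge_zero_zero {A : Type*} [Mul A] (g : Fin (m + 2) → A) :
    merge g 0 0 = g 0 * g 1 := by
  simp [merge]

theorem merge_apply_zero {A : Type*} [Mul A] (g : Fin (m + 2) → A) {i : Fin (m + 1)} (hi : i ≠ 0) :
    merge g i 0 = g 0 := by
  simp [merge, Fin.pos_iff_ne_zero.2 hi]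

theorem merge_zero_succ {A : Type*} [Mul A] (g : Fin (m + 2) → A) (k : Fin m) :
    merge g 0 k.succ = g k.succ.succ := by
  simp [merge]

theorem merge_bord_zero_zero (f : Fin (m + 3) → (Fin n → ℂ) → ℂ) : merge (bord f) 0 0 = f 1 := by
  rw [merge_zero_zero, bord_zero, one_mul]
  exact bord_succ_castSucc f 0

theorem merge_bord_zero_last (f : Fin (m + 3) → (Fin n → ℂ) → ℂ) :
    merge (bord f) 0 (Fin.last (m + 1)) = 1 := by
  rw [← Fin.succ_last, merge_zero_succ, Fin.succ_last, Fin.succ_last, bord_last]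

theorem bord_merge_bord_zero (f : Fin (m + 3) → (Fin n → ℂ) → ℂ) (r : Fin m) :
    bord (merge (bord f) 0) r.succ.castSucc = f r.succ.succ.castSucc := by
  rw [bord_succ_castSucc, ← Fin.succ_castSucc, merge_zero_succ]
  exact bord_succ_castSucc f r.succ

/-- `Φ^{-q}(∂g)`, where `∂` is the bar differential. -/
noncomputable def PhiBoundary (q : ℕ) (g : Fin (q + 3) → (Fin n → ℂ) → ℂ) : Coeff n := fun I p =>
  ∑ i : Fin (q + 2), (-1 : ℂ) ^ (i : ℕ) * Phi n q (merge g i) I p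

theorem Phi_succ (f : Fin (q + 3) → (Fin n → ℂ) → ℂ) (J : Finset (Fin n)) (p : Pt n) :
    Phi n (q + 1) f J p =
      f 0 p.1 * f (Fin.last (q + 2)) p.2 * P n (PhiBoundary q (bord f)) J p :=
  rfl

theorem Phi_bord_zero (f : Fin 2 → (Fin n → ℂ) → ℂ) (J : Finset (Fin n)) :
    Phi n 0 (bord f) J = fun _ => if J = ∅ then 1 else 0 := by
  have hlast : bord f 1 = 1 := bord_last f
  ext p
  simp [Phi, ofFun, bord_zero, hlast]

theorem Phi_bord_succ (f : Fin (q + 3) → (Fin n → ℂ) → ℂ) :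
    Phi n (q + 1) (bord f) = P n (PhiBoundary q (bord f)) := by
  ext J p
  simp [Phi_succ, bord_bord, bord_zero, bord_last]

theorem Phi_eq_mul_Phi_bord (f : Fin (q + 2) → (Fin n → ℂ) → ℂ) (J : Finset (Fin n)) (p : Pt n) :
    Phi n q f J p = f 0 p.1 * f (Fin.last (q + 1)) p.2 * Phi n q (bord f) J p := by
  cases q with
  | zero =>
    rw [Phi_bord_zero, Phi, ofFun]
    simp
  | succ q => rw [Phi_bord_succ, Phi_succ]

theorem differentiableOn_fst_mul_snd {a b : (Fin n → ℂ) → ℂ} (ha : DifferentiableOn ℂ a U)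
    (hb : DifferentiableOn ℂ b U) :
    DifferentiableOn ℂ (fun p : Pt n => a p.1 * b p.2) (U ×ˢ U) :=
  (ha.comp differentiableOn_fst fun _ hp => hp.1).mul
    (hb.comp differentiableOn_snd fun _ hp => hp.2)

theorem differentiableOn_Phi (hUopen : IsOpen U) (hU : Convex ℝ U)
    {f : Fin (q + 2) → (Fin n → ℂ) → ℂ} (hf : ∀ k, DifferentiableOn ℂ (f k) U)
    (J : Finset (Fin n)) : DifferentiableOn ℂ (Phi n q f J) (U ×ˢ U) := by
  induction q generalizing J with
  | zero =>
    unfold Phi ofFun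
    split_ifs
    exacts [differentiableOn_fst_mul_snd (hf 0) (hf 1), differentiableOn_const 0]
  | succ q ih =>
    exact (differentiableOn_fst_mul_snd (hf 0) (hf _)).mul <|
      differentiableOn_P hUopen hU (fun I => DifferentiableOn.fun_sum fun i _ =>
        (ih (differentiableOn_merge (differentiableOn_bord hf) i) I).const_mul _) J

theorem dz_Phi_bord_eq_zero (hUopen : IsOpen U) (hU : Convex ℝ U)
    {f : Fin (q + 2) → (Fin n → ℂ) → ℂ} (hf : ∀ k, DifferentiableOn ℂ (f k) U)
    (J : Finset (Fin n)) (hp : p ∈ U ×ˢ U) : dz (Phi n q (bord f)) J p = 0 := by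
  cases q with
  | zero => simp [Phi_bord_zero, dz, pd]
  | succ q =>
    rw [Phi_bord_succ]
    exact dz_P_eq_zero hUopen hU (fun I => DifferentiableOn.fun_sum fun i _ =>
      (differentiableOn_Phi hUopen hU
        (differentiableOn_merge (differentiableOn_bord hf) i) I).const_mul _) J hp

theorem dz_Phi (hUopen : IsOpen U) (hU : Convex ℝ U)
    {g : Fin (q + 2) → (Fin n → ℂ) → ℂ} (hg : ∀ k, DifferentiableOn ℂ (g k) U)
    (J : Finset (Fin n)) (hp : p ∈ U ×ˢ U) :
    dz (Phi n q g) J p = g (Fin.last (q + 1)) p.2 *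
      vecWedge (fun j => pdU n j (g 0) p.1) (fun I => Phi n q (bord g) I p) J := by
  have hsplit : Phi n q g =
      fun I p => g 0 p.1 * g (Fin.last (q + 1)) p.2 * Phi n q (bord g) I p :=
    funext₂ (Phi_eq_mul_Phi_bord g)
  have hdiff : ∀ I, DifferentiableAt ℂ (Phi n q (bord g) I) p := fun I =>
    (differentiableOn_Phi hUopen hU (differentiableOn_bord hg) I).differentiableAt
      ((hUopen.prod hUopen).mem_nhds hp)
  rw [hsplit, dz_fst_mul_snd_mul ((hg 0).differentiableAt (hUopen.mem_nhds hp.1))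
    ((hg _).differentiableAt (hUopen.mem_nhds hp.2)) hdiff, dz_Phi_bord_eq_zero hUopen hU hg J hp,
    mul_zero, add_zero]

theorem dz_PhiBoundary_bord (hUopen : IsOpen U) (hU : Convex ℝ U)
    {f : Fin (q + 3) → (Fin n → ℂ) → ℂ} (hf : ∀ k, DifferentiableOn ℂ (f k) U)
    (J : Finset (Fin n)) (hp : p ∈ U ×ˢ U) :
    dz (PhiBoundary q (bord f)) J p =
      vecWedge (fun j => pdU n j (f 1) p.1)
        (fun I => Phi n q (bord (merge (bord f) 0)) I p) J := by
  have hface : ∀ i k, DifferentiableOn ℂ (merge (bord f) i k) U :=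
    differentiableOn_merge (differentiableOn_bord hf)
  have hdiff : ∀ i ∈ Finset.univ, ∀ I, DifferentiableAt ℂ (Phi n q (merge (bord f) i) I) p :=
    fun i _ I => (differentiableOn_Phi hUopen hU (hface i) I).differentiableAt
      ((hUopen.prod hUopen).mem_nhds hp)
  have hvanish : ∀ i ≠ 0, dz (Phi n q (merge (bord f) i)) J p = 0 := fun i hi => by
    have hpdU : (fun j => pdU n j (merge (bord f) i 0) p.1) = 0 := by
      ext j
      simp [merge_apply_zero _ hi, bord_zero, pdU]
    rw [dz_Phi hUopen hU (hface i) J hp, hpdU, vecWedge_zero_left, Pi.zero_apply, mul_zero]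
  unfold PhiBoundary
  rw [dz_sum_const_mul hdiff, Finset.sum_eq_single 0
    (fun i _ hi => by rw [hvanish i hi, mul_zero]) (by simp), dz_Phi hUopen hU (hface 0) J hp,
    merge_bord_zero_zero, merge_bord_zero_last]
  simp

theorem Phi_succ_diag (hUopen : IsOpen U) (hU : Convex ℝ U)
    {f : Fin (q + 3) → (Fin n → ℂ) → ℂ} (hf : ∀ k, DifferentiableOn ℂ (f k) U)
    (J : Finset (Fin n)) (hz : z ∈ U) :
    Phi n (q + 1) f J (z, z) = f 0 z * f (Fin.last (q + 2)) z * ((J.card : ℂ)⁻¹ *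
      vecWedge (fun j => pdU n j (f 1) z)
        (fun I => Phi n q (bord (merge (bord f) 0)) I (z, z)) J) := by
  rw [Phi_succ, P_diag, dz_PhiBoundary_bord hUopen hU hf J ⟨hz, hz⟩]

theorem Phi_diag (hUopen : IsOpen U) (hU : Convex ℝ U)
    {f : Fin (q + 2) → (Fin n → ℂ) → ℂ} (hf : ∀ k, DifferentiableOn ℂ (f k) U)
    (J : Finset (Fin n)) (hz : z ∈ U) :
    Phi n q f J (z, z) = (q.factorial : ℂ)⁻¹ * (f 0 z * f (Fin.last (q + 1)) z) *
      wedgeCoeff (fun r j => pdU n j (f r.succ.castSucc) z) J := by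
  induction q generalizing J with
  | zero => by_cases hJ : J = ∅ <;> simp [Phi, ofFun, wedgeCoeff, hJ]
  | succ q ih =>
    have hface : ∀ I, Phi n q (bord (merge (bord f) 0)) I (z, z) =
        (q.factorial : ℂ)⁻¹ * wedgeCoeff (fun r j => pdU n j (f r.succ.succ.castSucc) z) I :=
      fun I => by
        rw [ih (differentiableOn_bord (differentiableOn_merge (differentiableOn_bord hf) 0)) I]
        simp only [bord_zero, bord_last, bord_merge_bord_zero, Pi.one_apply, mul_one]
    have hwedge : vecWedge (fun j => pdU n j (f 1) z)
        (wedgeCoeff fun r j => pdU n j (f r.succ.succ.castSucc) z) J =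
          wedgeCoeff (fun (r : Fin (q + 1)) j => pdU n j (f r.succ.castSucc) z) J :=
      congrFun (vecWedge_wedgeCoeff fun r j => pdU n j (f r.succ.castSucc) z) J
    simp only [Phi_succ_diag hUopen hU hf J hz, hface, vecWedge_const_mul, hwedge]
    by_cases hJ : J.card = q + 1
    · rw [hJ, Nat.factorial_succ, Nat.cast_mul, mul_inv]
      ring
    · simp [wedgeCoeff, hJ]

end BarComplex

theorem statement8_general (n : ℕ) (U : Set (Fin n → ℂ)) (hUopen : IsOpen U) (q : ℕ)
    (f : Fin (q + 2) → ((Fin n → ℂ) → ℂ)) (hf : ∀ k, DifferentiableOn ℂ (f k) U) :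
    ∀ z ∈ U,
      (∀ (J : Finset (Fin n)) (hJ : J.card = q),
        Phi n q f J (z, z) =
          (q.factorial : ℂ)⁻¹ * (f 0 z * f (Fin.last (q + 1)) z) *
            Matrix.det (Matrix.of fun r c : Fin q =>
              pdU n (J.orderIsoOfFin hJ c) (f r.succ.castSucc) z)) ∧
      (∀ J : Finset (Fin n), J.card ≠ q → Phi n q f J (z, z) = 0) := by
  intro z hz
  obtain ⟨ε, hε, hball⟩ := Metric.isOpen_iff.1 hUopen z hz
  have hdiag := fun J => Phi_diag Metric.isOpen_ball (convex_ball z ε)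
    (fun k => (hf k).mono hball) J (Metric.mem_ball_self hε)
  refine ⟨fun J hJ => ?_, fun J hJ => ?_⟩
  · rw [hdiag J, wedgeCoeff, dif_pos hJ]
    simp only [Finset.coe_orderIsoOfFin_apply]
  · rw [hdiag J, wedgeCoeff, dif_neg hJ, mul_zero]

/-- For every `0 ≤ q ≤ n`, the restriction of
`Φ^{-q}(f₀ ⊗ f₁ ⊗ … ⊗ f_{q+1})` to the diagonal is
`(1/q!) f₀(z) f_{q+1}(z) (Σ_j ∂f₁/∂z^j e^j) ∧ … ∧ (Σ_j ∂f_q/∂z^j e^j)`,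
i.e. `(1/q!) f₀ f_{q+1} df₁ ∧ … ∧ df_q` — the Hochschild–Kostant–Rosenberg map.
In coefficients: the coefficient on `e^J` with `|J| = q` is the minor
`(1/q!) f₀(z) f_{q+1}(z) det((∂f_r/∂z^{j_c})(z))`, and the coefficients on `e^J`
with `|J| ≠ q` vanish. -/
theorem statement8 (n : ℕ) (hn : 1 ≤ n)
    (U : Set (Fin n → ℂ)) (hUopen : IsOpen U) (hUconv : Convex ℝ U)
    (hUne : U.Nonempty)
    (q : ℕ) (hq : q ≤ n)
    (f : Fin (q + 2) → ((Fin n → ℂ) → ℂ))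
    (hf : ∀ k, DifferentiableOn ℂ (f k) U) :
    ∀ z ∈ U,
      (∀ (J : Finset (Fin n)) (hJ : J.card = q),
        Phi n q f J (z, z) =
          (q.factorial : ℂ)⁻¹ * (f 0 z * f (Fin.last (q + 1)) z) *
            Matrix.det (Matrix.of fun r c : Fin q =>
              pdU n (J.orderIsoOfFin hJ c) (f r.succ.castSucc) z)) ∧
      (∀ J : Finset (Fin n), J.card ≠ q → Phi n q f J (z, z) = 0) := by
  exact statement8_general n U hUopen q f hf

end TwistedKoszul
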